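/- Let α ∈ (0,1) be irrational with continued fraction expansion α = [a_1, a_2, …] and suppose the sequence (a_n) is bounded. Then for every λ ∈ ℝ \ {0}, every θ ∈ [0,1), and every E ∈ ℂ, the limit γ_θ(E) = lim_{n→∞} (1/n)·ln‖M(λ,E,v_{α,θ}^n)‖ exists, and its value is the same for all θ ∈ [0,1). -/

import Mathlib

open scoped Classical

noncomputable section

/-- The Sturmian potential `v_{α,θ}(n) = χ_{[1-α,1)}(nα + θ mod 1)`. -/
def sturmian (α θ : ℝ) (n : ℤ) : ℝ :=
  if Int.fract (n * α + θ) ∈ Set.Ico (1 - α) 1 then 1 else 0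

/-- Iterates of the Gauss map, starting at `α`. -/
def cfGauss (α : ℝ) : ℕ → ℝ
  | 0 => α
  | n + 1 => Int.fract (cfGauss α n)⁻¹

/-- The continued fraction coefficients `a_n` of `α = [a_1, a_2, …]` (for `n ≥ 1`):
`a_1 = ⌊1/α⌋`, `a_2 = ⌊1/fract(1/α)⌋`, … . -/
def cfCoeff (α : ℝ) (n : ℕ) : ℕ := ⌊(cfGauss α (n - 1))⁻¹⌋₊

/-- The standard words, with an index shift: `sWord a n` is `s_{n-1}`.  Thus
`sWord a 0 = s_{-1} = 1`, `sWord a 1 = s_0 = 0`, `sWord a 2 = s_1 = 0^{a_1 - 1} 1`, and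
`sWord a (n+1) = s_n = s_{n-1}^{a_n} s_{n-2}` for `n ≥ 2`. -/
def sWord (a : ℕ → ℕ) : ℕ → List ℝ
  | 0 => [1]
  | 1 => [0]
  | 2 => List.replicate (a 1 - 1) (0 : ℝ) ++ [1]
  | n + 3 => (List.replicate (a (n + 2)) (sWord a (n + 2))).flatten ++ sWord a (n + 1)

/-- The `n`-th letter (for `n ≥ 1`) of the one-sided infinite word `c_α = lim s_n`:
since `|s_n| ≥ n`, it is the `n`-th letter of `s_n`. -/
def cword (α : ℝ) (n : ℕ) : ℝ := (sWord (cfCoeff α) (n + 1)).getD (n - 1) 0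

/-- `w` is a (finite) prefix of the one-sided infinite word `c_α`. -/
def IsPrefC (α : ℝ) (w : List ℝ) : Prop :=
  w = (List.range w.length).map fun i => cword α (i + 1)

/-- The one-step transfer matrix `T(λ,E,a) = [[E - λa, -1], [1, 0]]`. -/
def transferT (lam : ℝ) (E : ℂ) (a : ℝ) : Matrix (Fin 2) (Fin 2) ℂ :=
  !![E - lam * a, -1; 1, 0]

/-- The transfer matrix over a word `w = w_1 … w_n`:
`M(λ,E,w) = T(λ,E,w_n) ⋯ T(λ,E,w_1)`. -/
def transferM (lam : ℝ) (E : ℂ) : List ℝ → Matrix (Fin 2) (Fin 2) ℂ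
  | [] => 1
  | a :: w => transferM lam E w * transferT lam E a

/-- The operator norm on `ℂ²` (with the euclidean norm) of a `2 × 2` complex matrix. -/
def opNorm (A : Matrix (Fin 2) (Fin 2) ℂ) : ℝ :=
  ‖Matrix.toEuclideanCLM (𝕜 := ℂ) A‖

/-- The word `v_{α,θ}^n = v_{α,θ}(1) … v_{α,θ}(n)`. -/
def sturmianWord (α θ : ℝ) (n : ℕ) : List ℝ :=
  (List.range n).map fun k => sturmian α θ (k + 1)

/-- The set of finite nonempty subwords of a two-sided sequence `v : ℤ → ℝ`. -/
def SubZ (v : ℤ → ℝ) : Set (List ℝ) :=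
  {w | w ≠ [] ∧ ∃ k : ℤ, w = (List.range w.length).map fun i => v (k + i)}

/-- The set of finite nonempty subwords of the one-sided word `c_α` (indexed from `1`). -/
def SubC (α : ℝ) : Set (List ℝ) :=
  {w | w ≠ [] ∧ ∃ k : ℕ, 1 ≤ k ∧ w = (List.range w.length).map fun i => cword α (k + i)}

/-- `W_α`, the set of all finite nonempty subwords of the sequences `v_{α,θ}`, `θ ∈ [0,1)`. -/
def Walpha (α : ℝ) : Set (List ℝ) :=
  {w | ∃ θ ∈ Set.Ico (0 : ℝ) 1, w ∈ SubZ (sturmian α θ)}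

/-- `α` is a bounded density number: `limsup_{n→∞} (1/n) ∑_{j=1}^n a_j < ∞` for the
continued fraction coefficients `a_j` of `α`. -/
def BoundedDensity (α : ℝ) : Prop :=
  Filter.IsBoundedUnder (· ≤ ·) Filter.atTop
    (fun n : ℕ => (1 / n : ℝ) * ∑ j ∈ Finset.Icc 1 n, (cfCoeff α j : ℝ))

end

/-!
Boundedness of the coefficients makes `α` badly approximable, `c ≤ q |q α - p|`, and this forces the
Sturmian words to be linearly repetitive: the set of phases producing a given word of length `n`
contains an interval of length `c / n` modulo `1`, which every orbit of the rotation by `α` enters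
within `K n` steps. Since `log ‖M(λ, E, ·)‖` is subadditive under concatenation, Fekete's lemma
gives a limit `γ` for the normalized suprema over all phases. A word on which the normalized value
is much smaller than `γ` would recur so often along every orbit that it would pull these suprema
below `γ`; hence convergence to `γ` holds for every phase, and even uniformly.
-/

section SubadditiveCocycle

variable {X : Type*} {T : X → X} {f : ℕ → X → ℝ}

/-- `f` is a subadditive cocycle over the dynamical system `T`, the hypothesis of Kingman's
ergodic theorem. -/
def SubadditiveCocycle (T : X → X) (f : ℕ → X → ℝ) : Prop :=
  ∀ m n x, f (m + n) x ≤ f m x + f n (T^[m] x)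

lemma SubadditiveCocycle.subadditive_iSup [Nonempty X] (hf : SubadditiveCocycle T f)
    (hbdd : ∀ n, BddAbove (Set.range (f n))) : Subadditive fun n => ⨆ x, f n x := fun m n =>
  ciSup_le fun x => (hf m n x).trans <|
    add_le_add (le_ciSup (hbdd m) x) (le_ciSup (hbdd n) (T^[m] x))

/- Every orbit segment of length `(K + 3) * n` meets a point where `f n` is at most `f n y`, with
pieces of length at least `n` before and after that visit, where `f` grows at rate at most `a`. -/
lemma SubadditiveCocycle.le_add_of_return (hf : SubadditiveCocycle T f) {n K : ℕ} {a : ℝ} {y : X}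
    (hupper : ∀ m, n ≤ m → ∀ x, f m x ≤ a * m)
    (hreturn : ∀ x, ∃ j < K * n, f n (T^[j] x) ≤ f n y) (x : X) :
    f ((K + 3) * n) x ≤ a * ((K + 2) * n) + f n y := by
  obtain ⟨j, hj, hjy⟩ := hreturn (T^[n] x)
  obtain ⟨t, ht⟩ := Nat.exists_eq_add_of_le hj.le
  have hlen : (K + 3) * n = j + n + (n + (n + t)) := by linarith
  have hlenR : ((K : ℝ) + 2) * n = (j + n : ℕ) + (n + t : ℕ) := by
    have : (K : ℝ) * n = j + t := by exact_mod_cast ht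
    push_cast
    linarith
  rw [← Function.iterate_add_apply] at hjy
  calc f ((K + 3) * n) x
      ≤ f (j + n) x + (f n (T^[j + n] x) + f (n + t) (T^[n] (T^[j + n] x))) := by
        rw [hlen]
        exact (hf _ _ x).trans (by gcongr; exact hf _ _ _)
    _ ≤ a * (j + n : ℕ) + (f n y + a * (n + t : ℕ)) := by
        gcongr
        · exact hupper _ (by omega) x
        · exact hupper _ (by omega) _
    _ = a * ((K + 2) * n) + f n y := by rw [hlenR]; ring

lemma bddAbove_range_of_abs_le {C : ℝ} (hbound : ∀ n x, |f n x| ≤ C * n) (n : ℕ) :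
    BddAbove (Set.range (f n)) :=
  ⟨C * n, Set.forall_mem_range.2 fun x => (abs_le.1 (hbound n x)).2⟩

lemma bddBelow_range_iSup_div_of_abs_le [Nonempty X] {C : ℝ} (hbound : ∀ n x, |f n x| ≤ C * n) :
    BddBelow (Set.range fun n : ℕ => (⨆ x, f n x) / n) := by
  refine ⟨-|C|, Set.forall_mem_range.2 fun n => ?_⟩
  obtain ⟨x⟩ := ‹Nonempty X›
  rcases n.eq_zero_or_pos with rfl | hn
  · simp
  rw [le_div_iff₀ (by positivity)]
  calc -|C| * n ≤ -(C * n) := by nlinarith [le_abs_self C, Nat.cast_nonneg (α := ℝ) n]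
    _ ≤ f n x := (abs_le.1 (hbound n x)).1
    _ ≤ ⨆ x, f n x := le_ciSup (bddAbove_range_of_abs_le hbound n) x

theorem SubadditiveCocycle.exists_tendstoUniformly [Nonempty X] (hf : SubadditiveCocycle T f)
    {C : ℝ} (hbound : ∀ n x, |f n x| ≤ C * n) {K : ℕ}
    (hreturn : ∀ n, 1 ≤ n → ∀ x y, ∃ j < K * n, f n (T^[j] x) ≤ f n y) :
    ∃ γ : ℝ, TendstoUniformly (fun (n : ℕ) x => f n x / n) (fun _ => γ) Filter.atTop := by
  have hbdd := bddAbove_range_of_abs_le hbound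
  have hG := hf.subadditive_iSup hbdd
  have hGbdd := bddBelow_range_iSup_div_of_abs_le hbound
  refine ⟨hG.lim, Metric.tendstoUniformly_iff.2 fun δ hδ => ?_⟩
  set γ := hG.lim
  obtain ⟨ε, hε, hεδ⟩ : ∃ ε > 0, (K + 2) * ε < δ :=
    ⟨δ / (K + 3), by positivity, by field_simp; linarith⟩
  have hsup_lt : ∀ᶠ n : ℕ in Filter.atTop, (⨆ x, f n x) / n < γ + ε :=
    (hG.tendsto_lim hGbdd).eventually_lt_const (lt_add_of_pos_right _ hε)
  filter_upwards [Filter.eventually_forall_ge_atTop.2 hsup_lt, Filter.eventually_ge_atTop 1]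
    with n hn hn1 y
  have hupper : ∀ m, n ≤ m → ∀ x, f m x ≤ (γ + ε) * m := fun m hm x =>
    (le_ciSup (hbdd m) x).trans
      ((div_le_iff₀ (by exact_mod_cast hn1.trans hm)).1 (hn m hm).le)
  have hn0 : (0 : ℝ) < n := by exact_mod_cast hn1
  have hlower : γ * ((K + 3) * n) ≤ (γ + ε) * ((K + 2) * n) + f n y := by
    calc γ * ((K + 3) * n) ≤ ⨆ x, f ((K + 3) * n) x := by
          have := hG.lim_le_div hGbdd (n := (K + 3) * n) (by positivity)
          rw [le_div_iff₀ (by positivity)] at this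
          exact_mod_cast this
      _ ≤ (γ + ε) * ((K + 2) * n) + f n y :=
          ciSup_le (hf.le_add_of_return hupper fun x => hreturn n hn1 x y)
  have hle : f n y / n ≤ γ + ε := (div_le_iff₀ hn0).2 (hupper n le_rfl y)
  have hge : γ - (K + 2) * ε ≤ f n y / n := by
    rw [le_div_iff₀ hn0]
    linarith
  rw [Real.dist_eq, abs_lt]
  constructor <;> nlinarith [Nat.cast_nonneg (α := ℝ) K]

end SubadditiveCocycle

section ContinuedFraction

variable {α : ℝ}

lemma irrational_cfGauss (hirr : Irrational α) : ∀ n, Irrational (cfGauss α n)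
  | 0 => hirr
  | n + 1 => (irrational_inv_iff.2 (irrational_cfGauss hirr n)).sub_intCast _

lemma cfGauss_mem_Ioo (hirr : Irrational α) (hα : α ∈ Set.Ioo (0 : ℝ) 1) :
    ∀ n, cfGauss α n ∈ Set.Ioo (0 : ℝ) 1
  | 0 => hα
  | n + 1 => ⟨lt_of_le_of_ne (Int.fract_nonneg _) (irrational_cfGauss hirr (n + 1)).ne_zero.symm,
      Int.fract_lt_one _⟩

lemma cfGauss_mul_cfCoeff_add {n : ℕ} (hpos : 0 < cfGauss α n) :
    cfGauss α n * (cfCoeff α (n + 1) + cfGauss α (n + 1)) = 1 := by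
  have hinv : (cfCoeff α (n + 1) : ℝ) + cfGauss α (n + 1) = (cfGauss α n)⁻¹ := by
    rw [cfCoeff, Nat.add_sub_cancel, natCast_floor_eq_intCast_floor (inv_pos.2 hpos).le]
    exact Int.floor_add_fract _
  rw [hinv, mul_inv_cancel₀ hpos.ne']

lemma one_le_cfCoeff_succ {n : ℕ} (hpos : 0 < cfGauss α n) (hle : cfGauss α n ≤ 1) :
    1 ≤ cfCoeff α (n + 1) :=
  Nat.le_floor (by simpa using (one_le_inv₀ hpos).2 hle)

lemma one_div_le_cfGauss {n B : ℕ} (hpos : 0 < cfGauss α n) (hB : cfCoeff α (n + 1) ≤ B) :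
    1 / ((B : ℝ) + 1) ≤ cfGauss α n := by
  rw [one_div]
  refine inv_le_of_inv_le₀ hpos ((Nat.lt_floor_add_one _).le.trans ?_)
  gcongr
  exact hB

/-- The absolute value of the binary quadratic form `(q + ξ p)(q x - p)`, normalized so that it is
invariant under the natural extension `(x, ξ) ↦ (1/x - a, 1/(a + ξ))` of the Gauss map. At `ξ = 0`
it is the quantity `q |q x - p|` measuring how well `p / q` approximates `x`. -/
noncomputable def gaussForm (x ξ q p : ℝ) : ℝ := (q + ξ * p) * |q * x - p| / (1 + ξ * x)

lemma gaussForm_add_mul {x y a ξ : ℝ} (hx : 0 < x) (hxy : x * (a + y) = 1) (haξ : 0 < a + ξ)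
    (p r : ℝ) : gaussForm x ξ (p * a + r) p = gaussForm y (1 / (a + ξ)) p r := by
  have habs : |(p * a + r) * x - p| = x * |p * y - r| := by
    rw [← abs_of_pos hx, ← abs_mul, abs_of_pos hx, abs_sub_comm]
    congr 1
    linear_combination -p * hxy
  have hden : 1 + 1 / (a + ξ) * y = (1 + ξ * x) / (x * (a + ξ)) := by
    field_simp
    linear_combination hxy
  rw [gaussForm, gaussForm, habs, hden]
  field_simp
  ring

lemma div_two_le_gaussForm {x ξ q p δ : ℝ} (hx : x ∈ Set.Ioo (0 : ℝ) 1) (hξ : ξ ∈ Set.Icc (0 : ℝ) 1)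
    (hq : 1 ≤ q) (hp : 0 ≤ p) (hδ : 0 ≤ δ) (h : δ ≤ |q * x - p|) : δ / 2 ≤ gaussForm x ξ q p := by
  obtain ⟨hx0, hx1⟩ := hx
  obtain ⟨hξ0, hξ1⟩ := hξ
  have hnum : δ ≤ (q + ξ * p) * |q * x - p| := by
    have : 0 ≤ ξ * p := by positivity
    nlinarith
  rw [gaussForm]
  gcongr
  nlinarith

/- Euclid's algorithm: as long as `q > p * a`, invariance replaces `(q, p)` by `(p, q - p * a)`, and
once `q ≤ p * a` the value is visibly not small. -/
lemma half_sq_le_gaussForm {b : ℝ} (hb : 0 < b) (hx : ∀ n, cfGauss α n ∈ Set.Ico b 1) (q : ℕ) :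
    ∀ (p n : ℕ) (ξ : ℝ), 1 ≤ q → 1 ≤ p → ξ ∈ Set.Icc (0 : ℝ) 1 →
      b ^ 2 / 2 ≤ gaussForm (cfGauss α n) ξ q p := by
  induction q using Nat.strong_induction_on with
  | _ q ih =>
    intro p n ξ hq hp hξ
    obtain ⟨hbx, hx1⟩ := hx n
    have hby := (hx (n + 1)).1
    have hx0 := hb.trans_le hbx
    have hxy := cfGauss_mul_cfCoeff_add hx0
    have ha := one_le_cfCoeff_succ hx0 hx1.le
    set x := cfGauss α n
    set y := cfGauss α (n + 1)
    set a := cfCoeff α (n + 1)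
    rcases le_or_gt q (p * a) with hqp | hqp
    · refine div_two_le_gaussForm ⟨hx0, hx1⟩ hξ (by exact_mod_cast hq) p.cast_nonneg
        (by positivity) ?_
      have hqpR : (q : ℝ) ≤ p * a := by exact_mod_cast hqp
      have hpR : (1 : ℝ) ≤ p := by exact_mod_cast hp
      have hy0 := hb.trans_le hby
      have hxy0 : 0 ≤ x * y := by positivity
      rw [abs_sub_comm]
      calc b ^ 2 ≤ x * y := by nlinarith
        _ ≤ p * (x * y) := le_mul_of_one_le_left hxy0 hpR
        _ = p - p * a * x := by linear_combination (p : ℝ) * hxy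
        _ ≤ p - q * x := by gcongr
        _ ≤ |p - q * x| := le_abs_self _
    · obtain ⟨r, rfl⟩ := Nat.exists_eq_add_of_lt hqp
      have haR : (1 : ℝ) ≤ a := by exact_mod_cast ha
      have haξ : 1 ≤ a + ξ := by linarith [hξ.1]
      have hlt : p < p * a + r + 1 := by nlinarith
      have hstep := ih p hlt (r + 1) (n + 1) (1 / (a + ξ)) hp (by omega)
        ⟨by positivity, (div_le_one (by positivity)).2 haξ⟩
      rw [← gaussForm_add_mul hx0 hxy (by positivity)] at hstep
      exact_mod_cast hstep

end ContinuedFraction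

section BadlyApproximable

/-- `α` is badly approximable with constant `c`: `|α - p / q| ≥ c / q ^ 2` for all fractions
`p / q`, written without division. -/
def BadlyApproximableWith (c α : ℝ) : Prop :=
  ∀ q p : ℤ, q ≠ 0 → c ≤ |(q : ℝ)| * |q * α - p|

variable {c α : ℝ}

lemma badlyApproximableWith_of_natCast (h : ∀ (q : ℕ) (p : ℤ), 1 ≤ q → c ≤ q * |q * α - p|) :
    BadlyApproximableWith c α := by
  intro q p hq
  obtain ⟨k, rfl | rfl⟩ := q.eq_nat_or_neg
  · simpa using h k p (by omega)
  · have := h k (-p) (by omega)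
    rw [← abs_neg] at this
    convert this using 2 <;> push_cast
    · simp
    · congr 1
      ring

theorem exists_badlyApproximableWith (hirr : Irrational α) (hα : α ∈ Set.Ioo (0 : ℝ) 1)
    (hbd : ∃ B : ℕ, ∀ n : ℕ, 1 ≤ n → cfCoeff α n ≤ B) :
    ∃ c > 0, BadlyApproximableWith c α := by
  obtain ⟨B, hB⟩ := hbd
  obtain ⟨b, hb, hx⟩ : ∃ b > 0, ∀ n, cfGauss α n ∈ Set.Ico b 1 :=
    ⟨1 / (B + 1), by positivity, fun n =>
      ⟨one_div_le_cfGauss (cfGauss_mem_Ioo hirr hα n).1 (hB (n + 1) (by omega)),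
        (cfGauss_mem_Ioo hirr hα n).2⟩⟩
  refine ⟨b ^ 2 / 2, by positivity, badlyApproximableWith_of_natCast fun q p hq => ?_⟩
  rcases le_or_gt p 0 with hp | hp
  · have hbα : b ≤ α := (hx 0).1
    have hqR : (1 : ℝ) ≤ q := by exact_mod_cast hq
    have hpR : (p : ℝ) ≤ 0 := by exact_mod_cast hp
    have hdist : α ≤ |q * α - p| := le_trans (by nlinarith [hα.1]) (le_abs_self (q * α - p))
    calc b ^ 2 / 2 ≤ 1 * α := by nlinarith [hα.2]
      _ ≤ q * |q * α - p| := mul_le_mul hqR hdist hα.1.le (by positivity)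
  · lift p to ℕ using hp.le
    simpa [gaussForm, cfGauss] using
      half_sq_le_gaussForm hb hx q p 0 0 hq (by omega) (by simp)

lemma BadlyApproximableWith.le_one (hα : BadlyApproximableWith c α) : c ≤ 1 := by
  have h := hα 1 (round α) one_ne_zero
  simp only [Int.cast_one, abs_one, one_mul] at h
  linarith [abs_sub_round α]

lemma BadlyApproximableWith.mul_le_den (hα : BadlyApproximableWith c α) {N : ℕ} {s : ℚ}
    (hs : |α - s| ≤ 1 / (((N : ℝ) + 1) * s.den)) : c * (N + 1) ≤ s.den := by
  have hden : (0 : ℝ) < s.den := by exact_mod_cast s.den_pos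
  have hdist : |(s.den : ℝ) * α - s.num| = s.den * |α - s| := by
    rw [← Nat.abs_cast s.den, ← abs_mul, Nat.abs_cast, mul_sub, Rat.cast_def s,
      mul_div_cancel₀ _ hden.ne']
  rw [← le_div_iff₀ (by positivity)]
  calc c ≤ s.den * |(s.den : ℝ) * α - s.num| := by
        simpa using hα s.den s.num (by exact_mod_cast s.den_ne_zero)
    _ ≤ s.den * (s.den * (1 / (((N : ℝ) + 1) * s.den))) := by rw [hdist]; gcongr
    _ = s.den / (N + 1) := by field_simp

lemma exists_nat_lt_mul_add_mul_eq_of_isCoprime {a b : ℤ} (hab : IsCoprime a b) (hb : 0 < b)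
    (r : ℤ) :   ∃ j : ℕ, (j : ℤ) < b ∧ ∃ m : ℤ, j * a + m * b = r := by
  obtain ⟨u, v, huv⟩ := hab
  obtain ⟨j, hjb, hj⟩ := Int.existsUnique_equiv_nat (r * u) hb
  obtain ⟨k, hk⟩ := hj.dvd
  exact ⟨j, hjb, k * a + r * v, by linear_combination -a * hk + r * huv⟩

lemma exists_nat_lt_den_mul_add_mem_Ico (s : ℚ) (t : ℝ) :
    ∃ j < s.den, ∃ m : ℤ, (j * s + m : ℝ) ∈ Set.Ico t (t + 1 / s.den) := by
  have hden : (0 : ℝ) < s.den := by exact_mod_cast s.den_pos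
  obtain ⟨j, hj, m, hjm⟩ := exists_nat_lt_mul_add_mul_eq_of_isCoprime
    (b := s.den) (Int.isCoprime_iff_gcd_eq_one.2 s.reduced) (by exact_mod_cast s.den_pos)
    ⌈s.den * t⌉
  have hjmR : (j : ℝ) * s.num + m * s.den = ⌈s.den * t⌉ := by exact_mod_cast hjm
  have hvalue : (j * s + m : ℝ) = ⌈s.den * t⌉ / s.den := by
    rw [← hjmR, Rat.cast_def]
    field_simp
  refine ⟨j, by exact_mod_cast hj, m, ?_, ?_⟩ <;> rw [hvalue]
  · rw [le_div_iff₀ hden, mul_comm]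
    exact Int.le_ceil _
  · rw [div_lt_iff₀ hden, add_mul, one_div_mul_cancel hden.ne', mul_comm t]
    exact Int.ceil_lt_add_one _

/- Dirichlet's theorem replaces `α` by a fraction `s` with denominator at most `N`, at a cost of
`1 / N` on either side; bad approximability makes the denominator, hence the density of the orbit of
the rotation by `s`, comparable to `N`. -/
theorem BadlyApproximableWith.exists_add_mem_Ico (hα : BadlyApproximableWith c α) (hc : 0 < c)
    {N : ℕ} (hN : 0 < N) (x : ℝ) {y z : ℝ} (hyz : (1 / c + 2) / N ≤ z - y) :
    ∃ j < N, ∃ m : ℤ, x + j * α + m ∈ Set.Ico y z := by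
  obtain ⟨s, hs, hsN⟩ := Real.exists_rat_abs_sub_le_and_den_le α hN
  obtain ⟨j, hj, m, hjm, hjm'⟩ := exists_nat_lt_den_mul_add_mem_Ico s (y - x + 1 / N)
  have herror : |(j : ℝ) * α - j * s| < 1 / N := by
    calc |(j : ℝ) * α - j * s| = j * |α - s| := by rw [← mul_sub, abs_mul, Nat.abs_cast]
      _ ≤ s.den * (1 / ((N + 1) * s.den)) := by gcongr
      _ = 1 / (N + 1) := by field_simp
      _ < 1 / N := by gcongr; linarith
  have hdensity : 1 / (s.den : ℝ) ≤ 1 / c / N := by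
    rw [div_div]
    gcongr
    linarith [hα.mul_le_den hs]
  have hsplit : (1 / c + 2) / (N : ℝ) = 1 / c / N + 1 / N + 1 / N := by ring
  rw [abs_lt] at herror
  exact ⟨j, hj.trans_le hsN, m, by linarith, by linarith⟩

lemma BadlyApproximableWith.le_mul_fract_gap (hα : BadlyApproximableWith c α) {n : ℕ} (hn : 1 ≤ n)
    {u v : ℝ} {q : ℤ} (huv : u - v = q * α) (hq : |q| ≤ n) :
    c ≤ n * (Int.fract u + (1 - Int.fract v)) := by
  rcases eq_or_ne q 0 with rfl | hq0
  · obtain rfl : u = v := by simpa [sub_eq_zero] using huv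
    have hnR : (1 : ℝ) ≤ n := by exact_mod_cast hn
    linarith [hα.le_one]
  have hgap : Int.fract u + (1 - Int.fract v) = q * α - (⌊u⌋ - ⌊v⌋ - 1 : ℤ) := by
    rw [← huv, Int.fract, Int.fract]
    push_cast
    ring
  have hpos : 0 < Int.fract u + (1 - Int.fract v) := by
    linarith [Int.fract_nonneg u, Int.fract_lt_one v]
  calc c ≤ |(q : ℝ)| * |q * α - (⌊u⌋ - ⌊v⌋ - 1 : ℤ)| := hα _ _ hq0
    _ = |(q : ℝ)| * (Int.fract u + (1 - Int.fract v)) := by rw [← hgap, abs_of_pos hpos]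
    _ ≤ n * (Int.fract u + (1 - Int.fract v)) := by
        gcongr
        exact_mod_cast hq

end BadlyApproximable

section SturmianWord

variable {α : ℝ}

lemma sturmianWord_eq_map_range (α θ : ℝ) (n : ℕ) :
    sturmianWord α θ n = (List.range n).map fun k : ℕ => sturmian α θ ((k : ℤ) + 1) := by
  simp [sturmianWord, List.map_eq_flatMap, List.flatMap_assoc]

@[simp] lemma length_sturmianWord (α θ : ℝ) (n : ℕ) : (sturmianWord α θ n).length = n := by
  simp [sturmianWord_eq_map_range]

lemma eq_zero_or_one_of_mem_sturmianWord {θ a : ℝ} {n : ℕ} (ha : a ∈ sturmianWord α θ n) :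
    a = 0 ∨ a = 1 := by
  rw [sturmianWord_eq_map_range] at ha
  obtain ⟨k, -, rfl⟩ := List.mem_map.1 ha
  unfold sturmian
  split_ifs <;> simp

lemma sturmianWord_add (α θ : ℝ) (m n : ℕ) :
    sturmianWord α θ (m + n) = sturmianWord α θ m ++ sturmianWord α (θ + m * α) n := by
  simp only [sturmianWord_eq_map_range, List.range_add, List.map_append, List.map_map]
  congr 1
  refine List.map_congr_left fun k _ => ?_
  simp only [Function.comp_apply, sturmian]
  congr! 3
  push_cast
  ring

lemma sturmianWord_add_intCast (α θ : ℝ) (m : ℤ) (n : ℕ) :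
    sturmianWord α (θ + m) n = sturmianWord α θ n := by
  simp only [sturmianWord, sturmian, ← add_assoc, Int.fract_add_intCast]

lemma sturmian_eq_floor_sub_floor (hα : α ∈ Set.Icc (0 : ℝ) 1) (θ : ℝ) (n : ℤ) :
    sturmian α θ n = ⌊((n + 1 : ℤ) : ℝ) * α + θ⌋ - ⌊(n : ℝ) * α + θ⌋ := by
  obtain ⟨hα0, hα1⟩ := hα
  have hshift : ((n + 1 : ℤ) : ℝ) * α + θ = (n : ℝ) * α + θ + α := by push_cast; ring
  rw [sturmian, hshift]
  set z := (n : ℝ) * α + θ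
  have hfract := Int.floor_add_fract z
  have hlt := Int.fract_lt_one z
  split_ifs with h
  · have hfloor : ⌊z + α⌋ = ⌊z⌋ + 1 := by
      rw [Int.floor_eq_iff]
      push_cast
      constructor <;> linarith [h.1]
    rw [hfloor]
    push_cast
    ring
  · have hlt' : Int.fract z < 1 - α := not_le.1 fun hle => h ⟨hle, hlt⟩
    have hfloor : ⌊z + α⌋ = ⌊z⌋ := by
      rw [Int.floor_eq_iff]
      constructor <;> linarith [Int.fract_nonneg z]
    rw [hfloor, sub_self]

lemma sturmianWord_congr_of_floor_eq (hα : α ∈ Set.Icc (0 : ℝ) 1) {θ θ' : ℝ} {n : ℕ}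
    (h : ∀ k ≤ n, ⌊((k : ℝ) + 1) * α + θ⌋ = ⌊((k : ℝ) + 1) * α + θ'⌋) :
    sturmianWord α θ n = sturmianWord α θ' n := by
  simp only [sturmianWord_eq_map_range, sturmian_eq_floor_sub_floor hα]
  refine List.map_congr_left fun k hk => ?_
  have hk' := List.mem_range.1 hk
  have h0 := h k hk'.le
  have h1 := h (k + 1) hk'
  push_cast at h0 h1 ⊢
  rw [h0, h1]

/- The `n + 1` points `(k + 1) α + θ` modulo `1` leave a gap of length at least `c / n` around `0`,
and the word only changes when a translation moves one of them across `0`. -/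
lemma BadlyApproximableWith.exists_Ico_sturmianWord_eq {c : ℝ} (hbad : BadlyApproximableWith c α)
    (hα : α ∈ Set.Icc (0 : ℝ) 1) {n : ℕ} (hn : 1 ≤ n) (θ : ℝ) :
    ∃ y z : ℝ, c / n ≤ z - y ∧
      ∀ θ' ∈ Set.Ico y z, sturmianWord α θ' n = sturmianWord α θ n := by
  let u : ℕ → ℝ := fun k => ((k : ℝ) + 1) * α + θ
  have hne : (Finset.range (n + 1)).Nonempty := ⟨0, by simp⟩
  obtain ⟨i, hi, hmin⟩ := Finset.exists_min_image _ (fun k => Int.fract (u k)) hne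
  obtain ⟨l, hl, hmax⟩ := Finset.exists_max_image _ (fun k => Int.fract (u k)) hne
  rw [Finset.mem_range] at hi hl
  refine ⟨θ - Int.fract (u i), θ + (1 - Int.fract (u l)), ?_, fun θ' hθ' => ?_⟩
  · have hgap := hbad.le_mul_fract_gap hn (u := u i) (v := u l) (q := (i : ℤ) - l)
      (by simp only [u]; push_cast; ring) (abs_le.2 (by omega))
    rw [div_le_iff₀ (by exact_mod_cast hn)]
    linarith
  · refine sturmianWord_congr_of_floor_eq hα fun k hk => Int.floor_eq_iff.2 ?_
    have hk' : k ∈ Finset.range (n + 1) := by rw [Finset.mem_range]; omega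
    have hu : (⌊u k⌋ : ℝ) + Int.fract (u k) = ((k : ℝ) + 1) * α + θ := Int.floor_add_fract _
    constructor <;> linarith [hmin k hk', hmax k hk', hθ'.1, hθ'.2]

theorem BadlyApproximableWith.sturmianWord_linearly_repetitive {c : ℝ}
    (hbad : BadlyApproximableWith c α) (hc : 0 < c) (hα : α ∈ Set.Icc (0 : ℝ) 1) :
    ∃ K : ℕ, ∀ n : ℕ, 1 ≤ n → ∀ x θ : ℝ, ∃ j < K * n,
      sturmianWord α (x + j * α) n = sturmianWord α θ n := by
  refine ⟨⌈(1 / c + 2) / c⌉₊, fun n hn x θ => ?_⟩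
  set K := ⌈(1 / c + 2) / c⌉₊
  have hK : 0 < K := Nat.ceil_pos.2 (by positivity)
  have hlen : (1 / c + 2) / ((K * n : ℕ) : ℝ) ≤ c / n := by
    have hceil : (1 / c + 2) / c ≤ K := Nat.le_ceil _
    push_cast
    rw [← div_div]
    gcongr
    rwa [div_le_comm₀ (by positivity) hc]
  obtain ⟨y, z, hyz, hword⟩ := hbad.exists_Ico_sturmianWord_eq hα hn θ
  obtain ⟨j, hj, m, hjm⟩ := hbad.exists_add_mem_Ico hc (Nat.mul_pos hK hn) x (hlen.trans hyz)
  exact ⟨j, hj, by rw [← hword _ hjm, sturmianWord_add_intCast]⟩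

theorem BadlyApproximableWith.exists_tendstoUniformly_sturmianWord {c : ℝ}
    (hbad : BadlyApproximableWith c α) (hc : 0 < c) (hα : α ∈ Set.Icc (0 : ℝ) 1)
    {F : List ℝ → ℝ} (hsub : ∀ v w, F (v ++ w) ≤ F v + F w) {C : ℝ}
    (hbound : ∀ w, (∀ a ∈ w, a = 0 ∨ a = 1) → |F w| ≤ C * w.length) :
    ∃ γ : ℝ, TendstoUniformly (fun (n : ℕ) θ => F (sturmianWord α θ n) / n) (fun _ => γ)
      Filter.atTop := by
  obtain ⟨K, hK⟩ := hbad.sturmianWord_linearly_repetitive hc hα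
  have hcocycle : SubadditiveCocycle (· + α) fun n θ => F (sturmianWord α θ n) := fun m n θ => by
    simp only [sturmianWord_add, add_right_iterate_apply, nsmul_eq_mul]
    exact hsub _ _
  refine hcocycle.exists_tendstoUniformly (C := C) (K := K) (fun n θ => ?_) fun n hn x θ => ?_
  · simpa using hbound _ fun a => eq_zero_or_one_of_mem_sturmianWord (α := α) (θ := θ) (n := n)
  · obtain ⟨j, hj, hword⟩ := hK n hn x θ
    exact ⟨j, hj, by rw [add_right_iterate_apply, nsmul_eq_mul, hword]⟩

end SturmianWord

section TransferMatrix

lemma norm_det_le_norm_toEuclideanCLM_pow {n : Type*} [Fintype n] [DecidableEq n]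
    (A : Matrix n n ℂ) : ‖A.det‖ ≤ ‖Matrix.toEuclideanCLM (𝕜 := ℂ) A‖ ^ Fintype.card n := by
  rcases isEmpty_or_nonempty n with hn | hn
  · simp
  have hroot : ∀ μ ∈ A.charpoly.roots, ‖μ‖ ≤ ‖Matrix.toEuclideanCLM (𝕜 := ℂ) A‖ := fun μ hμ =>
    spectrum.norm_le_norm_of_mem <| by
      rw [AlgEquiv.spectrum_eq, Matrix.mem_spectrum_iff_isRoot_charpoly]
      exact Polynomial.isRoot_of_mem_roots hμ
  calc ‖A.det‖ = (A.charpoly.roots.map normHom).prod := by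
        rw [Matrix.det_eq_prod_roots_charpoly, ← normHom_apply, map_multiset_prod]
    _ ≤ ‖Matrix.toEuclideanCLM (𝕜 := ℂ) A‖ ^ A.charpoly.roots.card :=
        Multiset.prod_map_le_pow_card (f := normHom) (fun μ _ => norm_nonneg μ) hroot
    _ = ‖Matrix.toEuclideanCLM (𝕜 := ℂ) A‖ ^ Fintype.card n := by
        rw [IsAlgClosed.card_roots_eq_natDegree, Matrix.charpoly_natDegree_eq_dim]

lemma opNorm_nonneg (A : Matrix (Fin 2) (Fin 2) ℂ) : 0 ≤ opNorm A := norm_nonneg _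

lemma opNorm_one : opNorm 1 = 1 := by
  rw [opNorm, map_one, norm_one]

lemma opNorm_mul_le (A B : Matrix (Fin 2) (Fin 2) ℂ) : opNorm (A * B) ≤ opNorm A * opNorm B := by
  rw [opNorm, map_mul]
  exact norm_mul_le _ _

lemma one_le_opNorm_of_det_eq_one {A : Matrix (Fin 2) (Fin 2) ℂ} (hA : A.det = 1) :
    1 ≤ opNorm A := by
  have h := norm_det_le_norm_toEuclideanCLM_pow A
  rw [hA, norm_one, Fintype.card_fin] at h
  exact (one_le_sq_iff₀ (opNorm_nonneg A)).1 h

variable (lam : ℝ) (E : ℂ)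

lemma transferM_append (v w : List ℝ) :
    transferM lam E (v ++ w) = transferM lam E w * transferM lam E v := by
  induction v with
  | nil => simp [transferM]
  | cons a v ih => simp [transferM, ih, Matrix.mul_assoc]

lemma det_transferM (w : List ℝ) : (transferM lam E w).det = 1 := by
  induction w with
  | nil => simp [transferM]
  | cons a w ih => simp [transferM, transferT, Matrix.det_fin_two_of, ih]

lemma one_le_opNorm_transferM (w : List ℝ) : 1 ≤ opNorm (transferM lam E w) :=
  one_le_opNorm_of_det_eq_one (det_transferM lam E w)

lemma opNorm_transferM_le_pow {D : ℝ} {w : List ℝ} (hD : ∀ a ∈ w, opNorm (transferT lam E a) ≤ D) :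
    opNorm (transferM lam E w) ≤ D ^ w.length := by
  induction w with
  | nil => simp [transferM, opNorm_one]
  | cons a w ih =>
    rw [List.forall_mem_cons] at hD
    rw [transferM, List.length_cons, pow_succ]
    exact (opNorm_mul_le _ _).trans <| mul_le_mul (ih hD.2) hD.1 (opNorm_nonneg _)
      (pow_nonneg ((opNorm_nonneg _).trans hD.1) _)

lemma log_opNorm_transferM_append_le (v w : List ℝ) :
    Real.log (opNorm (transferM lam E (v ++ w))) ≤
      Real.log (opNorm (transferM lam E v)) + Real.log (opNorm (transferM lam E w)) := by
  have hpos : ∀ u, 0 < opNorm (transferM lam E u) := fun u =>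
    one_pos.trans_le (one_le_opNorm_transferM lam E u)
  rw [← Real.log_mul (hpos v).ne' (hpos w).ne', transferM_append, mul_comm (opNorm _)]
  refine Real.log_le_log ?_ (opNorm_mul_le _ _)
  rw [← transferM_append]
  exact hpos _

lemma abs_log_opNorm_transferM_le {D : ℝ} {w : List ℝ}
    (hD : ∀ a ∈ w, opNorm (transferT lam E a) ≤ D) :
    |Real.log (opNorm (transferM lam E w))| ≤ Real.log D * w.length := by
  have hone := one_le_opNorm_transferM lam E w
  rw [abs_of_nonneg (Real.log_nonneg hone), mul_comm, ← Real.log_pow]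
  exact Real.log_le_log (one_pos.trans_le hone) (opNorm_transferM_le_pow lam E hD)

end TransferMatrix

theorem lyapunov_exponent_exists_uniformly_general
    (α : ℝ) (hirr : Irrational α) (hα : α ∈ Set.Ioo (0 : ℝ) 1)
    (hbd : ∃ B : ℕ, ∀ n : ℕ, 1 ≤ n → cfCoeff α n ≤ B) (lam : ℝ) (E : ℂ) :
    ∃ γ : ℝ, TendstoUniformly
      (fun (n : ℕ) θ =>
        (1 / n : ℝ) * Real.log (opNorm (transferM lam E (sturmianWord α θ n))))
      (fun _ => γ) Filter.atTop := by
  obtain ⟨c, hc, hbad⟩ := exists_badlyApproximableWith hirr hα hbd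
  simp_rw [one_div_mul_eq_div]
  refine hbad.exists_tendstoUniformly_sturmianWord hc (Set.Ioo_subset_Icc_self hα)
    (log_opNorm_transferM_append_le lam E) fun w hw => abs_log_opNorm_transferM_le lam E
      (D := max (opNorm (transferT lam E 0)) (opNorm (transferT lam E 1))) fun a ha => ?_
  rcases hw a ha with rfl | rfl
  · exact le_max_left _ _
  · exact le_max_right _ _

theorem lyapunov_exponent_exists_uniformly
    (α : ℝ) (hirr : Irrational α) (hα : α ∈ Set.Ioo (0 : ℝ) 1)
    (hbd : ∃ B : ℕ, ∀ n : ℕ, 1 ≤ n → cfCoeff α n ≤ B)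
    (lam : ℝ) (hlam : lam ≠ 0) (E : ℂ) :
    ∃ γ : ℝ, ∀ θ ∈ Set.Ico (0 : ℝ) 1,
      Filter.Tendsto
        (fun n : ℕ => (1 / n : ℝ) * Real.log (opNorm (transferM lam E (sturmianWord α θ n))))
        Filter.atTop (nhds γ) := by
  obtain ⟨γ, hγ⟩ := lyapunov_exponent_exists_uniformly_general α hirr hα hbd lam E
  exact ⟨γ, fun θ _ => hγ.tendsto_at θ⟩
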